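/- Let A, B, C, D be pairwise disjoint finite point sets in the plane such that A ∪ B ∪ C ∪ D is in general position, each of A, B, C contains at least two points, the triple {A, B, C} satisfies the full separating property, and D lies in the core of {A, B, C}. Then every crossing family in A ∪ B ∪ C ∪ D emanates from one of A, B, C, or D. -/

import Mathlib

open Set

abbrev Pt : Type := ℝ × ℝ

/-- Signed area determinant of the triple `(p, q, r)`: positive iff `r` lies strictly to the
left of the directed line from `p` to `q`. -/
def det2 (p q r : Pt) : ℝ :=
  (q.1 - p.1) * (r.2 - p.2) - (q.2 - p.2) * (r.1 - p.1)

/-- `P` is in general position: no three distinct points of `P` are collinear. -/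
def GenPos (P : Set Pt) : Prop :=
  ∀ p ∈ P, ∀ q ∈ P, ∀ r ∈ P, p ≠ q → p ≠ r → q ≠ r →
    ¬ Collinear ℝ ({p, q, r} : Set Pt)

/-- The open segment (relative interior) of an unordered pair of points. -/
def segOpen : Sym2 Pt → Set Pt :=
  Sym2.lift ⟨fun p q => openSegment ℝ p q, fun p q => openSegment_symm ℝ p q⟩

/-- `F` is a crossing family in `P`: a finite set of segments, each joining two distinct
points of `P`, such that every two distinct segments have internally intersecting
open segments. -/
def IsCrossingFamily (P : Set Pt) (F : Finset (Sym2 Pt)) : Prop :=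
  (∀ s ∈ F, ¬ s.IsDiag ∧ ∀ x ∈ s, x ∈ P) ∧
  (∀ s ∈ F, ∀ t ∈ F, s ≠ t → (segOpen s ∩ segOpen t).Nonempty)

/-- A family of segments emanates from `X` if every segment has an endpoint in `X`. -/
def EmanatesFrom (F : Finset (Sym2 Pt)) (X : Set Pt) : Prop :=
  ∀ s ∈ F, ∃ x ∈ s, x ∈ X

/-- `A` and `B` can be separated by a line. -/
def LineSeparated (A B : Set Pt) : Prop :=
  ∃ a b c : ℝ, (a, b) ≠ ((0 : ℝ), (0 : ℝ)) ∧
    (∀ p ∈ A, a * p.1 + b * p.2 < c) ∧ (∀ p ∈ B, c < a * p.1 + b * p.2)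

/-- `A` separates `B` from `C`: `A` and `B ∪ C` are separable by a line, and every line
through two distinct points of `A` has all of `B` strictly on one side and all of `C`
strictly on the other side. -/
def SeparatesFrom (A B C : Set Pt) : Prop :=
  LineSeparated A (B ∪ C) ∧
  ∀ p ∈ A, ∀ q ∈ A, p ≠ q →
    ((∀ x ∈ B, 0 < det2 p q x) ∧ (∀ y ∈ C, det2 p q y < 0)) ∨
    ((∀ x ∈ B, det2 p q x < 0) ∧ (∀ y ∈ C, 0 < det2 p q y))


/-- The cross product of two plane vectors. -/
def cross2 (u v : Pt) : ℝ := u.1 * v.2 - u.2 * v.1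

/-- The triple of pairwise disjoint sets `A, B, C` satisfies the full separating property:
each of them separates the other two from each other. -/
def FullSep (A B C : Set Pt) : Prop :=
  SeparatesFrom A C B ∧ SeparatesFrom B A C ∧ SeparatesFrom C B A

/-- `D` lies in the core of `{A, B, C}`: for every triple of pairwise non-parallel lines,
the first through two distinct points of `A`, the second through two distinct points of `B`,
and the third through two distinct points of `C`, every point of `D` lies in the open
triangle whose vertices are the three pairwise intersection points of the lines. -/
def InCore (A B C D : Set Pt) : Prop :=
  ∀ p₁ ∈ A, ∀ q₁ ∈ A, p₁ ≠ q₁ →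
  ∀ p₂ ∈ B, ∀ q₂ ∈ B, p₂ ≠ q₂ →
  ∀ p₃ ∈ C, ∀ q₃ ∈ C, p₃ ≠ q₃ →
  cross2 (q₁ - p₁) (q₂ - p₂) ≠ 0 →
  cross2 (q₁ - p₁) (q₃ - p₃) ≠ 0 →
  cross2 (q₂ - p₂) (q₃ - p₃) ≠ 0 →
  ∀ v₁₂ v₁₃ v₂₃ : Pt,
    det2 p₁ q₁ v₁₂ = 0 → det2 p₂ q₂ v₁₂ = 0 →
    det2 p₁ q₁ v₁₃ = 0 → det2 p₃ q₃ v₁₃ = 0 →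
    det2 p₂ q₂ v₂₃ = 0 → det2 p₃ q₃ v₂₃ = 0 →
    D ⊆ interior (convexHull ℝ ({v₁₂, v₁₃, v₂₃} : Set Pt))

/-!
Every line through two points of `A` has `B` and `C` on opposite sides, and it has `D` on one of
its two sides because `D` lies inside the triangle cut out by one line of each kind. Comparing the
barycentric coordinates of that triangle shows that the choice of side is cyclic: if a line of `A`
has `D` on the side of `B`, then every line of `B` has `D` on the side of `C`, every line of `C` has
`D` on the side of `A`, and every line of `A` has `D` on the side of `B`. The only alternative is
the mirror image of this pinwheel pattern, obtained by exchanging `B` and `C`.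

In a pinwheel, the lines of `B` keep a segment within `A` away from all segments that avoid `A`, and
a segment from `A` to `B` away from all segments that avoid `A`, except those within `B`. So a
crossing family with a segment inside `A`, `B` or `C` emanates from that set; one without such
segments but with a segment from `A` to `B` (or `B` to `C`, or `C` to `A`) emanates from `A`
(or `B`, or `C`); and otherwise every segment has an endpoint in `D`.
-/

section AffineFunctionals

theorem apply_neg_of_mem_openSegment {E : Type*} [AddCommGroup E] [Module ℝ E]
    (f : E →ᵃ[ℝ] ℝ) {x y z : E} (hx : f x < 0) (hy : f y ≤ 0) (hz : z ∈ openSegment ℝ x y) :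
    f z < 0 := by
  obtain ⟨a, b, ha, hb, hab, rfl⟩ := hz
  rw [Convex.combo_affine_apply hab, smul_eq_mul, smul_eq_mul]
  exact add_neg_of_neg_of_nonpos (mul_neg_of_pos_of_neg ha hx)
    (mul_nonpos_of_nonneg_of_nonpos hb.le hy)

theorem disjoint_openSegment_of_apply_neg {E : Type*} [AddCommGroup E] [Module ℝ E]
    (f : E →ᵃ[ℝ] ℝ) {x y z w : E} (hx : f x < 0) (hy : f y ≤ 0) (hz : 0 ≤ f z) (hw : 0 ≤ f w) :
    Disjoint (openSegment ℝ x y) (openSegment ℝ z w) := by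
  refine Set.disjoint_left.2 fun v hxy hzw => ?_
  have hnonneg : 0 ≤ f v :=
    ((convex_Ici 0).affine_preimage f).segment_subset hz hw (openSegment_subset_segment ℝ z w hzw)
  exact hnonneg.not_gt (apply_neg_of_mem_openSegment f hx hy hxy)

theorem isOpenMap_affineMap_of_apply_ne {E : Type*} [AddCommGroup E] [Module ℝ E]
    [TopologicalSpace E] [IsTopologicalAddGroup E] [ContinuousSMul ℝ E] [T2Space E]
    [FiniteDimensional ℝ E] (f : E →ᵃ[ℝ] ℝ) {x y : E} (hxy : f x ≠ f y) : IsOpenMap f := by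
  have hlinear : f.linear ≠ 0 := by
    intro hzero
    have hsub : f.linear (x - y) = f x - f y := f.linearMap_vsub x y
    rw [hzero, LinearMap.zero_apply] at hsub
    exact hxy (sub_eq_zero.1 hsub.symm)
  exact AffineMap.isOpenMap_linear_iff.1
    (f.linear.isOpenMap_of_finiteDimensional (LinearMap.surjective hlinear))

theorem apply_pos_of_mem_interior_convexHull {E : Type*} [AddCommGroup E] [Module ℝ E]
    [TopologicalSpace E] {f : E →ᵃ[ℝ] ℝ} (hf : IsOpenMap f) {s : Set E} (hs : ∀ v ∈ s, 0 ≤ f v)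
    {x : E} (hx : x ∈ interior (convexHull ℝ s)) : 0 < f x := by
  have hhull : convexHull ℝ s ⊆ f ⁻¹' Ici 0 :=
    convexHull_min hs ((convex_Ici 0).affine_preimage f)
  have himage : f '' interior (convexHull ℝ s) ⊆ interior (Ici 0) :=
    interior_maximal (image_subset_iff.2 (interior_subset.trans hhull)) (hf _ isOpen_interior)
  simpa only [interior_Ici, mem_Ioi] using himage (mem_image_of_mem f hx)

end AffineFunctionals

section Determinants

/-- The map `det2 p q` bundled as an affine functional, so that lines through two points can be used
to separate convex sets. -/
def det2AffineMap (p q : Pt) : Pt →ᵃ[ℝ] ℝ where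
  toFun := det2 p q
  linear := (q.1 - p.1) • LinearMap.snd ℝ ℝ ℝ - (q.2 - p.2) • LinearMap.fst ℝ ℝ ℝ
  map_vadd' x v := by
    simp only [det2, vadd_eq_add, Prod.fst_add, Prod.snd_add, LinearMap.sub_apply,
      LinearMap.smul_apply, LinearMap.fst_apply, LinearMap.snd_apply, smul_eq_mul]
    ring

theorem det2_self_left (p q : Pt) : det2 p q p = 0 := by
  simp [det2]

theorem det2_self_right (p q : Pt) : det2 p q q = 0 := by
  simp only [det2]
  ring

theorem det2_add_of_left (p q v : Pt) : det2 p q (p + v) = cross2 (q - p) v := by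
  simp [det2, cross2]

theorem cross2_neg_swap (u v : Pt) : -cross2 u v = cross2 v u := by
  simp only [cross2]
  ring

theorem exists_det2_eq_mul_of_cross2_eq_zero {p₁ q₁ p₂ q₂ : Pt} (hne : p₁ ≠ q₁)
    (hpar : cross2 (q₁ - p₁) (q₂ - p₂) = 0) :
    ∃ t : ℝ, ∀ x, det2 p₂ q₂ x = t * (det2 p₁ q₁ x - det2 p₁ q₁ p₂) := by
  simp only [cross2, Prod.fst_sub, Prod.snd_sub] at hpar
  have hcoord : q₁.1 - p₁.1 ≠ 0 ∨ q₁.2 - p₁.2 ≠ 0 := by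
    by_contra! h
    exact hne (Prod.ext (by linarith) (by linarith))
  rcases hcoord with h | h
  · refine ⟨(q₂.1 - p₂.1) / (q₁.1 - p₁.1), fun x => ?_⟩
    simp only [det2]
    field_simp
    linear_combination -(x.1 - p₂.1) * hpar
  · refine ⟨(q₂.2 - p₂.2) / (q₁.2 - p₁.2), fun x => ?_⟩
    simp only [det2]
    field_simp
    linear_combination -(x.2 - p₂.2) * hpar

theorem exists_det2_eq_zero_of_cross2_ne_zero {p₁ q₁ p₂ q₂ : Pt}
    (h : cross2 (q₁ - p₁) (q₂ - p₂) ≠ 0) :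
    ∃ v : Pt, det2 p₁ q₁ v = 0 ∧ det2 p₂ q₂ v = 0 := by
  have hline (t : ℝ) : det2 p₁ q₁ (p₁ + t • (q₁ - p₁)) = 0 ∧
      det2 p₂ q₂ (p₁ + t • (q₁ - p₁)) = det2 p₂ q₂ p₁ - t * cross2 (q₁ - p₁) (q₂ - p₂) := by
    simp only [det2, cross2, Prod.fst_add, Prod.snd_add, Prod.smul_fst, Prod.smul_snd,
      smul_eq_mul, Prod.fst_sub, Prod.snd_sub]
    constructor <;> ring
  refine ⟨_, (hline (det2 p₂ q₂ p₁ / cross2 (q₁ - p₁) (q₂ - p₂))).1, ?_⟩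
  rw [(hline _).2, div_mul_cancel₀ _ h, sub_self]

theorem sum_cross2_mul_det2_eq (p₁ q₁ p₂ q₂ p₃ q₃ x y : Pt) :
    cross2 (q₂ - p₂) (q₃ - p₃) * det2 p₁ q₁ x + cross2 (q₃ - p₃) (q₁ - p₁) * det2 p₂ q₂ x +
        cross2 (q₁ - p₁) (q₂ - p₂) * det2 p₃ q₃ x =
      cross2 (q₂ - p₂) (q₃ - p₃) * det2 p₁ q₁ y + cross2 (q₃ - p₃) (q₁ - p₁) * det2 p₂ q₂ y +
        cross2 (q₁ - p₁) (q₂ - p₂) * det2 p₃ q₃ y := by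
  simp only [det2, cross2, Prod.fst_sub, Prod.snd_sub]
  ring

theorem mul_det2_pos_of_mem_interior_convexHull {p q w x : Pt} {c : ℝ} {s : Set Pt} (hc : c ≠ 0)
    (hw : cross2 (q - p) w ≠ 0) (hs : ∀ v ∈ s, 0 ≤ c * det2 p q v)
    (hx : x ∈ interior (convexHull ℝ s)) : 0 < c * det2 p q x := by
  have hne : (c • det2AffineMap p q) p ≠ (c • det2AffineMap p q) (p + w) := by
    change c * det2 p q p ≠ c * det2 p q (p + w)
    rw [det2_self_left, det2_add_of_left, mul_zero]
    exact (mul_ne_zero hc hw).symm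
  exact apply_pos_of_mem_interior_convexHull (isOpenMap_affineMap_of_apply_ne _ hne) hs hx

end Determinants

/-- The zero set of `f` strictly separates `X` from `Y`. For `f = det2 p q` this is the condition on
the line `pq` in clause (C2) of `SeparatesFrom`; the sign of `f` is immaterial. -/
def Splits {α : Type*} (f : α → ℝ) (X Y : Set α) : Prop :=
  ((∀ x ∈ X, 0 < f x) ∧ ∀ y ∈ Y, f y < 0) ∨ ((∀ x ∈ X, f x < 0) ∧ ∀ y ∈ Y, 0 < f y)

namespace Splits

variable {α : Type*} {f : α → ℝ} {X Y : Set α}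

theorem symm (h : Splits f X Y) : Splits f Y X :=
  (Or.symm h).imp And.symm And.symm

theorem mul_neg (h : Splits f X Y) {x y : α} (hx : x ∈ X) (hy : y ∈ Y) : f x * f y < 0 := by
  rcases h with ⟨hX, hY⟩ | ⟨hX, hY⟩
  · exact mul_neg_of_pos_of_neg (hX x hx) (hY y hy)
  · exact mul_neg_of_neg_of_pos (hX x hx) (hY y hy)

theorem mul_mul_neg (h : Splits f X Y) {a : ℝ} (ha : a ≠ 0) {x y : α} (hx : x ∈ X) (hy : y ∈ Y) :
    a * f x * (a * f y) < 0 := by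
  rw [mul_mul_mul_comm]
  exact mul_neg_of_pos_of_neg (mul_self_pos.2 ha) (h.mul_neg hx hy)

theorem union_left (h : Splits f X Y) {Z : Set α} {x : α} (hx : x ∈ X)
    (hZ : ∀ z ∈ Z, 0 < f x * f z) : Splits f (X ∪ Z) Y := by
  refine h.imp (fun ⟨hX, hY⟩ => ⟨?_, hY⟩) (fun ⟨hX, hY⟩ => ⟨?_, hY⟩)
  · rintro z (hz | hz)
    · exact hX z hz
    · exact (pos_iff_pos_of_mul_pos (hZ z hz)).1 (hX x hx)
  · rintro z (hz | hz)
    · exact hX z hz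
    · exact (neg_iff_neg_of_mul_pos (hZ z hz)).1 (hX x hx)

end Splits

theorem cross2_ne_zero_of_splits {A B C : Set Pt} {p₁ q₁ p₂ q₂ x : Pt} (hne : p₁ ≠ q₁)
    (h₁ : Splits (det2 p₁ q₁) B C) (h₂ : Splits (det2 p₂ q₂) A C)
    (hp₁ : p₁ ∈ A) (hp₂ : p₂ ∈ B) (hx : x ∈ C) : cross2 (q₁ - p₁) (q₂ - p₂) ≠ 0 := by
  intro hpar
  obtain ⟨t, ht⟩ := exists_det2_eq_mul_of_cross2_eq_zero hne hpar
  have hneg₁ : det2 p₁ q₁ p₂ * det2 p₁ q₁ x < 0 := h₁.mul_neg hp₂ hx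
  have hneg₂ : det2 p₂ q₂ p₁ * det2 p₂ q₂ x < 0 := h₂.mul_neg hp₁ hx
  have hprod : det2 p₂ q₂ p₁ * det2 p₂ q₂ x =
      t ^ 2 * (det2 p₁ q₁ p₂ ^ 2 - det2 p₁ q₁ p₂ * det2 p₁ q₁ x) := by
    rw [ht, ht, det2_self_left]
    ring
  have hnonneg : 0 ≤ t ^ 2 * (det2 p₁ q₁ p₂ ^ 2 - det2 p₁ q₁ p₂ * det2 p₁ q₁ x) :=
    mul_nonneg (sq_nonneg t) (by linarith [sq_nonneg (det2 p₁ q₁ p₂)])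
  linarith

theorem mul_pos_of_common_factor {a u v : ℝ} (hu : 0 < a * u) (hv : 0 < a * v) : 0 < u * v := by
  have hprod : 0 < a * a * (u * v) := by
    rw [mul_mul_mul_comm]
    exact mul_pos hu hv
  exact pos_of_mul_pos_right hprod (mul_self_nonneg a)

/-- `D` lies inside the triangle bounded by the zero lines of `f`, `g` and `h`, expressed by
unnormalised barycentric coordinates: suitable multiples of `f`, `g` and `h` are positive on `D` and
have a nonnegative sum. The sum is not normalised to `1`, which leaves room for the degenerate
triangle of three concurrent lines when `D` is empty. -/
def TriangleEncloses {α : Type*} (f g h : α → ℝ) (D : Set α) : Prop :=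
  ∃ a b c : ℝ, (∀ x, 0 ≤ a * f x + b * g x + c * h x) ∧
    ∀ d ∈ D, 0 < a * f d ∧ 0 < b * g d ∧ 0 < c * h d

namespace TriangleEncloses

variable {α : Type*} {f g h : α → ℝ} {A B C D : Set α}

theorem rotate (H : TriangleEncloses f g h D) : TriangleEncloses g h f D := by
  obtain ⟨a, b, c, hsum, hD⟩ := H
  exact ⟨b, c, a, fun x => by linarith [hsum x], fun d hd => ⟨(hD d hd).2.1, (hD d hd).2.2,
    (hD d hd).1⟩⟩

theorem swap (H : TriangleEncloses f g h D) : TriangleEncloses f h g D := by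
  obtain ⟨a, b, c, hsum, hD⟩ := H
  exact ⟨a, c, b, fun x => by linarith [hsum x], fun d hd => ⟨(hD d hd).1, (hD d hd).2.2,
    (hD d hd).2.1⟩⟩

theorem splits_union_or (H : TriangleEncloses f g h D) (hf : Splits f B C) {x y : α} (hx : x ∈ B)
    (hy : y ∈ C) : Splits f (B ∪ D) C ∨ Splits f (C ∪ D) B := by
  obtain ⟨a, _, _, -, hD⟩ := H
  rcases lt_or_ge 0 (a * f x) with hfx | hfx
  · exact .inl (hf.union_left hx fun d hd => mul_pos_of_common_factor hfx (hD d hd).1)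
  · refine .inr (hf.symm.union_left hy fun d hd => mul_pos_of_common_factor ?_ (hD d hd).1)
    have ha : a ≠ 0 := left_ne_zero_of_mul (hD d hd).1.ne'
    exact pos_of_mul_neg_right (hf.mul_mul_neg ha hx hy) hfx

-- The point `z` lies on the line of `h` and across the line of `f` from `D`, so its remaining
-- coordinate has to be positive.
theorem splits_next (H : TriangleEncloses f g h D) (hf : Splits f (B ∪ D) C) (hg : Splits g C A)
    {z : α} (hz : z ∈ C) (hhz : h z = 0) : Splits g (C ∪ D) A := by
  obtain ⟨a, b, c, hsum, hD⟩ := H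
  refine hg.union_left hz fun d hd => ?_
  obtain ⟨hfd, hgd, -⟩ := hD d hd
  have hfz : a * f z < 0 :=
    (pos_iff_neg_of_mul_neg (hf.mul_mul_neg (left_ne_zero_of_mul hfd.ne')
      (mem_union_right B hd) hz)).1 hfd
  have hgz : 0 < b * g z := by
    have hsum_z := hsum z
    rw [hhz] at hsum_z
    linarith
  exact mul_pos_of_common_factor hgz hgd

end TriangleEncloses

theorem triangleEncloses_of_subset_interior {p₁ q₁ p₂ q₂ p₃ q₃ v₁₂ v₁₃ v₂₃ : Pt} {D : Set Pt}
    (h₁₂ : cross2 (q₁ - p₁) (q₂ - p₂) ≠ 0) (h₂₃ : cross2 (q₂ - p₂) (q₃ - p₃) ≠ 0)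
    (h₃₁ : cross2 (q₃ - p₃) (q₁ - p₁) ≠ 0)
    (h₁v₁₂ : det2 p₁ q₁ v₁₂ = 0) (h₂v₁₂ : det2 p₂ q₂ v₁₂ = 0)
    (h₁v₁₃ : det2 p₁ q₁ v₁₃ = 0) (h₃v₁₃ : det2 p₃ q₃ v₁₃ = 0)
    (h₂v₂₃ : det2 p₂ q₂ v₂₃ = 0) (h₃v₂₃ : det2 p₃ q₃ v₂₃ = 0)
    (hD : D ⊆ interior (convexHull ℝ {v₁₂, v₁₃, v₂₃})) :
    TriangleEncloses (det2 p₁ q₁) (det2 p₂ q₂) (det2 p₃ q₃) D := by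
  set k₁ := cross2 (q₂ - p₂) (q₃ - p₃)
  set k₂ := cross2 (q₃ - p₃) (q₁ - p₁)
  set k₃ := cross2 (q₁ - p₁) (q₂ - p₂)
  have hsum (x : Pt) : k₁ * det2 p₁ q₁ x + k₂ * det2 p₂ q₂ x + k₃ * det2 p₃ q₃ x =
      k₁ * det2 p₁ q₁ v₂₃ := by
    simpa [h₂v₂₃, h₃v₂₃] using sum_cross2_mul_det2_eq p₁ q₁ p₂ q₂ p₃ q₃ x v₂₃
  set K := k₁ * det2 p₁ q₁ v₂₃ with hK
  have hv₁₃ : k₂ * det2 p₂ q₂ v₁₃ = K := by simpa [h₁v₁₃, h₃v₁₃] using hsum v₁₃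
  have hv₁₂ : k₃ * det2 p₃ q₃ v₁₂ = K := by simpa [h₁v₁₂, h₂v₁₂] using hsum v₁₂
  obtain ⟨e, he, heK⟩ : ∃ e : ℝ, e ≠ 0 ∧ 0 ≤ e * K := by
    rcases le_total 0 K with h | h
    · exact ⟨1, one_ne_zero, by linarith⟩
    · exact ⟨-1, by norm_num, by linarith⟩
  refine ⟨e * k₁, e * k₂, e * k₃, fun x => ?_, fun d hd => ⟨?_, ?_, ?_⟩⟩
  · calc 0 ≤ e * K := heK
      _ = e * k₁ * det2 p₁ q₁ x + e * k₂ * det2 p₂ q₂ x + e * k₃ * det2 p₃ q₃ x := by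
        rw [← hsum x]
        ring
  · refine mul_det2_pos_of_mem_interior_convexHull (mul_ne_zero he h₂₃) h₁₂ ?_ (hD hd)
    simp [h₁v₁₂, h₁v₁₃, mul_assoc, ← hK, heK]
  · refine mul_det2_pos_of_mem_interior_convexHull (mul_ne_zero he h₃₁) h₂₃ ?_ (hD hd)
    simp [h₂v₁₂, h₂v₂₃, mul_assoc, hv₁₃, heK]
  · refine mul_det2_pos_of_mem_interior_convexHull (mul_ne_zero he h₁₂) h₃₁ ?_ (hD hd)
    simp [h₃v₁₃, h₃v₂₃, mul_assoc, hv₁₂, heK]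

/-- Every line through two distinct points of `A` strictly separates `X` from `Y`: clause (C2) of
`SeparatesFrom A X Y`. -/
def LinesSplit (A X Y : Set Pt) : Prop :=
  ∀ p ∈ A, ∀ q ∈ A, p ≠ q → Splits (det2 p q) X Y

namespace LinesSplit

variable {A X Y : Set Pt}

theorem symm (h : LinesSplit A X Y) : LinesSplit A Y X :=
  fun p hp q hq hpq => (h p hp q hq hpq).symm

theorem exists_affineMap (h : LinesSplit A X Y) (hA : A.Nontrivial) {p q : Pt} (hp : p ∈ A)
    (hq : q ∈ A) :
    ∃ f : Pt →ᵃ[ℝ] ℝ, f p = 0 ∧ f q = 0 ∧ (∀ x ∈ X, 0 < f x) ∧ ∀ y ∈ Y, f y < 0 := by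
  wlog hpq : p ≠ q generalizing q
  · obtain ⟨r, hr, hrp⟩ := hA.exists_ne p
    obtain ⟨f, hfp, -, hf⟩ := this hr hrp.symm
    exact ⟨f, hfp, not_not.1 hpq ▸ hfp, hf⟩
  rcases h p hp q hq hpq with ⟨hX, hY⟩ | ⟨hX, hY⟩
  · exact ⟨det2AffineMap p q, det2_self_left p q, det2_self_right p q, hX, hY⟩
  · exact ⟨-det2AffineMap p q, neg_eq_zero.2 (det2_self_left p q),
      neg_eq_zero.2 (det2_self_right p q), fun x hx => neg_pos.2 (hX x hx),
      fun y hy => neg_lt_zero.2 (hY y hy)⟩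

end LinesSplit

/-- Each triple consisting of a line through two points of `A`, one of `B` and one of `C` bounds a
triangle that contains `D`: the form in which the core condition is used. -/
def LinesEnclose (A B C D : Set Pt) : Prop :=
  ∀ p₁ ∈ A, ∀ q₁ ∈ A, p₁ ≠ q₁ → ∀ p₂ ∈ B, ∀ q₂ ∈ B, p₂ ≠ q₂ → ∀ p₃ ∈ C, ∀ q₃ ∈ C, p₃ ≠ q₃ →
    TriangleEncloses (det2 p₁ q₁) (det2 p₂ q₂) (det2 p₃ q₃) D

/-- The cyclic pattern of three sets `A`, `B`, `C` around `D`: every line of `A` has `D` on the side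
of `B`, every line of `B` has it on the side of `C`, and every line of `C` has it on the side of
`A`. -/
structure Pinwheel (A B C D : Set Pt) : Prop where
  nontrivial_left : A.Nontrivial
  nontrivial_middle : B.Nontrivial
  nontrivial_right : C.Nontrivial
  linesSplit_left : LinesSplit A (B ∪ D) C
  linesSplit_middle : LinesSplit B (C ∪ D) A
  linesSplit_right : LinesSplit C (A ∪ D) B

section Chirality

variable {A B C D : Set Pt}

theorem LinesEnclose.of_inCore (hA : LinesSplit A B C) (hB : LinesSplit B C A)
    (hC : LinesSplit C A B) (hcore : InCore A B C D) : LinesEnclose A B C D := by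
  intro p₁ hp₁ q₁ hq₁ h₁ p₂ hp₂ q₂ hq₂ h₂ p₃ hp₃ q₃ hq₃ h₃
  have split₁ : Splits (det2 p₁ q₁) B C := hA p₁ hp₁ q₁ hq₁ h₁
  have split₂ : Splits (det2 p₂ q₂) C A := hB p₂ hp₂ q₂ hq₂ h₂
  have split₃ : Splits (det2 p₃ q₃) A B := hC p₃ hp₃ q₃ hq₃ h₃
  have h₁₂ : cross2 (q₁ - p₁) (q₂ - p₂) ≠ 0 :=
    cross2_ne_zero_of_splits h₁ split₁ split₂.symm hp₁ hp₂ hp₃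
  have h₂₃ : cross2 (q₂ - p₂) (q₃ - p₃) ≠ 0 :=
    cross2_ne_zero_of_splits h₂ split₂ split₃.symm hp₂ hp₃ hp₁
  have h₁₃ : cross2 (q₁ - p₁) (q₃ - p₃) ≠ 0 :=
    cross2_ne_zero_of_splits h₁ split₁.symm split₃ hp₁ hp₃ hp₂
  obtain ⟨v₁₂, h₁v₁₂, h₂v₁₂⟩ := exists_det2_eq_zero_of_cross2_ne_zero h₁₂
  obtain ⟨v₁₃, h₁v₁₃, h₃v₁₃⟩ := exists_det2_eq_zero_of_cross2_ne_zero h₁₃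
  obtain ⟨v₂₃, h₂v₂₃, h₃v₂₃⟩ := exists_det2_eq_zero_of_cross2_ne_zero h₂₃
  refine triangleEncloses_of_subset_interior h₁₂ h₂₃ (cross2_neg_swap _ _ ▸ neg_ne_zero.2 h₁₃)
    h₁v₁₂ h₂v₁₂ h₁v₁₃ h₃v₁₃ h₂v₂₃ h₃v₂₃ ?_
  exact hcore p₁ hp₁ q₁ hq₁ h₁ p₂ hp₂ q₂ hq₂ h₂ p₃ hp₃ q₃ hq₃ h₃ h₁₂ h₁₃ h₂₃ v₁₂ v₁₃ v₂₃
    h₁v₁₂ h₂v₁₂ h₁v₁₃ h₃v₁₃ h₂v₂₃ h₃v₂₃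

theorem LinesEnclose.rotate (h : LinesEnclose A B C D) : LinesEnclose B C A D :=
  fun p₂ hp₂ q₂ hq₂ h₂ p₃ hp₃ q₃ hq₃ h₃ p₁ hp₁ q₁ hq₁ h₁ =>
    (h p₁ hp₁ q₁ hq₁ h₁ p₂ hp₂ q₂ hq₂ h₂ p₃ hp₃ q₃ hq₃ h₃).rotate

theorem LinesEnclose.swap (h : LinesEnclose A B C D) : LinesEnclose A C B D :=
  fun p₁ hp₁ q₁ hq₁ h₁ p₃ hp₃ q₃ hq₃ h₃ p₂ hp₂ q₂ hq₂ h₂ =>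
    (h p₁ hp₁ q₁ hq₁ h₁ p₂ hp₂ q₂ hq₂ h₂ p₃ hp₃ q₃ hq₃ h₃).swap

theorem LinesEnclose.linesSplit_next (h : LinesEnclose A B C D) (hC : C.Nontrivial)
    (hB : LinesSplit B C A) {p q : Pt} (hp : p ∈ A) (hq : q ∈ A) (hpq : p ≠ q)
    (hsplit : Splits (det2 p q) (B ∪ D) C) : LinesSplit B (C ∪ D) A := by
  intro p₂ hp₂ q₂ hq₂ h₂
  obtain ⟨p₃, hp₃, q₃, hq₃, h₃⟩ := hC
  exact (h p hp q hq hpq p₂ hp₂ q₂ hq₂ h₂ p₃ hp₃ q₃ hq₃ h₃).splits_next hsplit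
    (hB p₂ hp₂ q₂ hq₂ h₂) hp₃ (det2_self_left p₃ q₃)

theorem LinesEnclose.pinwheel (h : LinesEnclose A B C D) (hA : A.Nontrivial) (hB : B.Nontrivial)
    (hC : C.Nontrivial) (linesA : LinesSplit A B C) (linesB : LinesSplit B C A)
    (linesC : LinesSplit C A B) {p q : Pt} (hp : p ∈ A) (hq : q ∈ A) (hpq : p ≠ q)
    (hsplit : Splits (det2 p q) (B ∪ D) C) : Pinwheel A B C D := by
  have splitB : LinesSplit B (C ∪ D) A := h.linesSplit_next hC linesB hp hq hpq hsplit
  have splitC : LinesSplit C (A ∪ D) B := by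
    obtain ⟨p₂, hp₂, q₂, hq₂, h₂⟩ := hB
    exact h.rotate.linesSplit_next hA linesC hp₂ hq₂ h₂ (splitB p₂ hp₂ q₂ hq₂ h₂)
  have splitA : LinesSplit A (B ∪ D) C := by
    obtain ⟨p₃, hp₃, q₃, hq₃, h₃⟩ := hC
    exact h.rotate.rotate.linesSplit_next hB linesA hp₃ hq₃ h₃ (splitC p₃ hp₃ q₃ hq₃ h₃)
  exact ⟨hA, hB, hC, splitA, splitB, splitC⟩

theorem LinesEnclose.pinwheel_or_pinwheel (h : LinesEnclose A B C D) (hA : A.Nontrivial)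
    (hB : B.Nontrivial) (hC : C.Nontrivial) (linesA : LinesSplit A B C)
    (linesB : LinesSplit B C A) (linesC : LinesSplit C A B) :
    Pinwheel A B C D ∨ Pinwheel A C B D := by
  obtain ⟨p₁, hp₁, q₁, hq₁, h₁⟩ := id hA
  obtain ⟨p₂, hp₂, q₂, hq₂, h₂⟩ := id hB
  obtain ⟨p₃, hp₃, q₃, hq₃, h₃⟩ := id hC
  refine ((h p₁ hp₁ q₁ hq₁ h₁ p₂ hp₂ q₂ hq₂ h₂ p₃ hp₃ q₃ hq₃ h₃).splits_union_or
    (linesA p₁ hp₁ q₁ hq₁ h₁) hp₂ hp₃).imp ?_ ?_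
  · exact h.pinwheel hA hB hC linesA linesB linesC hp₁ hq₁ h₁
  · exact h.swap.pinwheel hA hC hB linesA.symm linesC.symm linesB.symm hp₁ hq₁ h₁

end Chirality

/-- Any two distinct segments of `F` cross. Unlike in `IsCrossingFamily`, `F` may be infinite. -/
def PairwiseCrossing (F : Set (Sym2 Pt)) : Prop :=
  F.Pairwise fun s t => (segOpen s ∩ segOpen t).Nonempty

/-- Every segment of `F` has an endpoint in `X`: the analogue of `EmanatesFrom` for families that
may be infinite. -/
def Emanates (F : Set (Sym2 Pt)) (X : Set Pt) : Prop :=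
  ∀ s ∈ F, ∃ x ∈ s, x ∈ X

/-- Some segment of `F` joins a point of `X` to a point of `Y`. -/
def Joins (F : Set (Sym2 Pt)) (X Y : Set Pt) : Prop :=
  ∃ x ∈ X, ∃ y ∈ Y, s(x, y) ∈ F

section Families

variable {X Y Z : Set Pt} {F : Set (Sym2 Pt)}

theorem joins_comm : Joins F X Y ↔ Joins F Y X := by
  constructor <;> rintro ⟨x, hx, y, hy, hF⟩ <;> exact ⟨y, hy, x, hx, Sym2.eq_swap ▸ hF⟩

theorem joins_union_left : Joins F (X ∪ Y) Z ↔ Joins F X Z ∨ Joins F Y Z := by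
  simp only [Joins, mem_union, or_and_right, exists_or]

theorem joins_union_right : Joins F X (Y ∪ Z) ↔ Joins F X Y ∨ Joins F X Z := by
  rw [joins_comm, joins_union_left, joins_comm, joins_comm (X := Z)]

theorem emanates_of_not_joins (hF : ∀ s ∈ F, ∀ x ∈ s, x ∈ X ∪ Y) (h : ¬Joins F Y Y) :
    Emanates F X := by
  intro s hs
  by_contra! hmiss
  have hY : ∀ x ∈ s, x ∈ Y := fun x hx => (hF s hs x hx).resolve_left (hmiss x hx)
  induction s using Sym2.ind with
  | _ x y => exact h ⟨x, hY x (Sym2.mem_mk_left x y), y, hY y (Sym2.mem_mk_right x y), hs⟩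

theorem PairwiseCrossing.apply_neg_of_apply_nonneg (hF : PairwiseCrossing F) (f : Pt →ᵃ[ℝ] ℝ)
    {x y z w : Pt} (hxy : s(x, y) ∈ F) (hzw : s(z, w) ∈ F) (hx : f x < 0) (hy : f y ≤ 0)
    (hz : 0 ≤ f z) : f w < 0 := by
  by_contra! hw
  have hne : s(x, y) ≠ s(z, w) := by
    intro h
    rcases Sym2.mem_iff.1 (h ▸ Sym2.mem_mk_left x y) with rfl | rfl <;> linarith
  exact Set.not_disjoint_iff_nonempty_inter.2 (hF hxy hzw hne)
    (disjoint_openSegment_of_apply_neg f hx hy hz hw)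

end Families

namespace Pinwheel

variable {A B C D : Set Pt} {F : Set (Sym2 Pt)}

theorem rotate (h : Pinwheel A B C D) : Pinwheel B C A D :=
  ⟨h.nontrivial_middle, h.nontrivial_right, h.nontrivial_left, h.linesSplit_middle,
    h.linesSplit_right, h.linesSplit_left⟩

theorem exists_affineMap_nonneg (h : Pinwheel A B C D) {y z : Pt} (hy : y ∈ B ∪ (C ∪ D))
    (hz : z ∈ B ∪ (C ∪ D)) :
    ∃ f : Pt →ᵃ[ℝ] ℝ, (∀ a ∈ A, f a < 0) ∧ 0 ≤ f y ∧ 0 ≤ f z := by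
  obtain ⟨b, hb⟩ := h.nontrivial_middle.nonempty
  have line {p q : Pt} (hp : p ∈ B) (hq : q ∈ B) :=
    h.linesSplit_middle.exists_affineMap h.nontrivial_middle hp hq
  rcases hy with hy | hy <;> rcases hz with hz | hz
  · obtain ⟨f, hfy, hfz, -, hA⟩ := line hy hz
    exact ⟨f, hA, hfy.ge, hfz.ge⟩
  · obtain ⟨f, hfy, -, hpos, hA⟩ := line hy hy
    exact ⟨f, hA, hfy.ge, (hpos z hz).le⟩
  · obtain ⟨f, hfz, -, hpos, hA⟩ := line hz hz
    exact ⟨f, hA, (hpos y hy).le, hfz.ge⟩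
  · obtain ⟨f, -, -, hpos, hA⟩ := line hb hb
    exact ⟨f, hA, (hpos y hy).le, (hpos z hz).le⟩

theorem emanates_of_joins_self (h : Pinwheel A B C D) (hF : ∀ s ∈ F, ∀ x ∈ s, x ∈ A ∪ B ∪ C ∪ D)
    (hcross : PairwiseCrossing F) (hAA : Joins F A A) : Emanates F A := by
  obtain ⟨a, ha, a', ha', haa'⟩ := hAA
  rw [union_assoc, union_assoc] at hF
  refine emanates_of_not_joins hF ?_
  rintro ⟨y, hy, z, hz, hyz⟩
  obtain ⟨f, hA, hfy, hfz⟩ := h.exists_affineMap_nonneg hy hz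
  exact hfz.not_gt (hcross.apply_neg_of_apply_nonneg f haa' hyz (hA a ha) (hA a' ha').le hfy)

theorem not_joins_of_joins (h : Pinwheel A B C D) (hcross : PairwiseCrossing F)
    (hAB : Joins F A B) : ¬Joins F (B ∪ (C ∪ D)) (C ∪ D) := by
  obtain ⟨a, ha, b, hb, hab⟩ := hAB
  rintro ⟨y, hy, z, hz, hyz⟩
  obtain ⟨f, hA, hfb, hfy, hfz⟩ :
      ∃ f : Pt →ᵃ[ℝ] ℝ, (∀ a ∈ A, f a < 0) ∧ f b = 0 ∧ 0 ≤ f y ∧ 0 ≤ f z := by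
    have line {q : Pt} (hq : q ∈ B) :=
      h.linesSplit_middle.exists_affineMap h.nontrivial_middle hb hq
    rcases hy with hy | hy
    · obtain ⟨f, hfb, hfy, hpos, hA⟩ := line hy
      exact ⟨f, hA, hfb, hfy.ge, (hpos z hz).le⟩
    · obtain ⟨f, hfb, -, hpos, hA⟩ := line hb
      exact ⟨f, hA, hfb, (hpos y hy).le, (hpos z hz).le⟩
  exact hfz.not_gt (hcross.apply_neg_of_apply_nonneg f hab hyz (hA a ha) hfb.le hfy)

theorem emanates_of_joins (h : Pinwheel A B C D) (hF : ∀ s ∈ F, ∀ x ∈ s, x ∈ A ∪ B ∪ C ∪ D)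
    (hcross : PairwiseCrossing F) (hAB : Joins F A B) (hBB : ¬Joins F B B) : Emanates F A := by
  rw [union_assoc, union_assoc] at hF
  refine emanates_of_not_joins hF fun hjoins => ?_
  have hother : ¬Joins F (B ∪ (C ∪ D)) (C ∪ D) := h.not_joins_of_joins hcross hAB
  rw [joins_union_right, or_iff_left hother, joins_union_left, or_iff_right hBB, joins_comm]
    at hjoins
  exact hother (joins_union_left.2 (Or.inl hjoins))

theorem emanates (h : Pinwheel A B C D) (hF : ∀ s ∈ F, ∀ x ∈ s, x ∈ A ∪ B ∪ C ∪ D)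
    (hcross : PairwiseCrossing F) :
    Emanates F A ∨ Emanates F B ∨ Emanates F C ∨ Emanates F D := by
  have hF' : ∀ s ∈ F, ∀ x ∈ s, x ∈ B ∪ C ∪ A ∪ D := by
    rwa [union_comm (B ∪ C), ← union_assoc]
  have hF'' : ∀ s ∈ F, ∀ x ∈ s, x ∈ C ∪ A ∪ B ∪ D := by
    rwa [union_assoc C, union_comm C]
  by_cases hAA : Joins F A A
  · exact .inl (h.emanates_of_joins_self hF hcross hAA)
  by_cases hBB : Joins F B B
  · exact .inr (.inl (h.rotate.emanates_of_joins_self hF' hcross hBB))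
  by_cases hCC : Joins F C C
  · exact .inr (.inr (.inl (h.rotate.rotate.emanates_of_joins_self hF'' hcross hCC)))
  by_cases hAB : Joins F A B
  · exact .inl (h.emanates_of_joins hF hcross hAB hBB)
  by_cases hBC : Joins F B C
  · exact .inr (.inl (h.rotate.emanates_of_joins hF' hcross hBC hCC))
  by_cases hCA : Joins F C A
  · exact .inr (.inr (.inl (h.rotate.rotate.emanates_of_joins hF'' hcross hCA hAA)))
  rw [union_comm _ D] at hF
  refine .inr (.inr (.inr (emanates_of_not_joins hF ?_)))
  simp only [joins_union_left, joins_union_right, joins_comm (X := B) (Y := A),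
    joins_comm (X := C) (Y := B), joins_comm (X := A) (Y := C), hAA, hBB, hCC, hAB, hBC, hCA,
    or_self, not_false_eq_true]

end Pinwheel

theorem crossing_family_emanates_of_fullSep_core_general {A B C D : Set Pt}
    (hA : A.Nontrivial) (hB : B.Nontrivial) (hC : C.Nontrivial)
    (linesA : LinesSplit A C B) (linesB : LinesSplit B A C) (linesC : LinesSplit C B A)
    (hcore : InCore A B C D) {F : Set (Sym2 Pt)} (hF : ∀ s ∈ F, ∀ x ∈ s, x ∈ A ∪ B ∪ C ∪ D)
    (hcross : PairwiseCrossing F) :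
    Emanates F A ∨ Emanates F B ∨ Emanates F C ∨ Emanates F D := by
  have henclose : LinesEnclose A B C D := .of_inCore linesA.symm linesB.symm linesC.symm hcore
  rcases henclose.pinwheel_or_pinwheel hA hB hC linesA.symm linesB.symm linesC.symm with
    hwheel | hwheel
  · exact hwheel.emanates hF hcross
  · rw [union_right_comm A B C] at hF
    exact (hwheel.emanates hF hcross).imp_right or_left_comm.1

theorem crossing_family_emanates_of_fullSep_core
    (A B C D : Finset Pt)
    (hAB : Disjoint A B) (hAC : Disjoint A C) (hAD : Disjoint A D)
    (hBC : Disjoint B C) (hBD : Disjoint B D) (hCD : Disjoint C D)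
    (hgen : GenPos (↑A ∪ ↑B ∪ ↑C ∪ ↑D))
    (hA : 2 ≤ A.card) (hB : 2 ≤ B.card) (hC : 2 ≤ C.card)
    (hfull : FullSep ↑A ↑B ↑C)
    (hcore : InCore ↑A ↑B ↑C ↑D)
    (F : Finset (Sym2 Pt))
    (hF : IsCrossingFamily (↑A ∪ ↑B ∪ ↑C ∪ ↑D) F) :
    EmanatesFrom F ↑A ∨ EmanatesFrom F ↑B ∨ EmanatesFrom F ↑C ∨ EmanatesFrom F ↑D := by
  exact crossing_family_emanates_of_fullSep_core_general
    (Finset.one_lt_card_iff_nontrivial.1 hA) (Finset.one_lt_card_iff_nontrivial.1 hB)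
    (Finset.one_lt_card_iff_nontrivial.1 hC) hfull.1.2 hfull.2.1.2 hfull.2.2.2 hcore
    (fun s hs => (hF.1 s hs).2) (fun s hs t ht => hF.2 s hs t ht)
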